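/- Fix error metrics d^K, d^N satisfying the stated assumptions, error levels εK, εN > 0, and p ∈ (0,1). If the minimum R_p(εK, εN) = min{F_p(μK, μN) : (μK, μN) ∈ C_K(εK) × C_N(εN)} is finite, then there exists a minimizing pair (μK′, μN′) ∈ C_K(εK) × C_N(εN) with F_p(μK′, μN′) = R_p(εK, εN) such that μK′ and μN′ are discrete measures and the union of their supports has cardinality at most 5. -/

import Mathlib

/- STATEMENT 10: If for p ∈ (0,1) the minimum R_p(εK, εN) of F_p over the feasible region
   is finite, then it is attained by a pair of discrete measures whose supports
   together contain at most 5 points. -/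

open MeasureTheory Filter Topology
open scoped ENNReal

abbrev I01 : Set ℝ := Set.Icc 0 1

open Classical in
/-- Kullback–Leibler divergence with logarithm base 2, valued in `EReal`. -/
noncomputable def klDiv2 {α : Type*} [MeasurableSpace α] (μ ν : Measure α) : EReal :=
  if μ ≪ ν ∧ Integrable (fun x => Real.logb 2 ((μ.rnDeriv ν x).toReal)) μ
  then ((∫ x, Real.logb 2 ((μ.rnDeriv ν x).toReal) ∂μ : ℝ) : EReal)
  else ⊤

noncomputable def mix {α : Type*} [MeasurableSpace α] (p : ℝ) (μ ν : Measure α) : Measure α :=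
  (ENNReal.ofReal p) • μ + (ENNReal.ofReal (1 - p)) • ν

/-- `F_p(μK, μN)`, with `F_0(μK, μN) = KL(μK ‖ μN)`. -/
noncomputable def Fp {α : Type*} [MeasurableSpace α] (p : ℝ) (μK μN : Measure α) : EReal :=
  if p = 0 then klDiv2 μK μN
  else klDiv2 μK (mix p μK μN) + (((1 - p) / p : ℝ) : EReal) * klDiv2 μN (mix p μK μN)

/-- Feasibility for the error constraints. -/
def Feasible (dK dN : I01 → ℝ≥0∞) (εK εN : ℝ) (μK μN : Measure I01) : Prop :=
  IsProbabilityMeasure μK ∧ IsProbabilityMeasure μN ∧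
    (∫⁻ x, dK x ∂μK) ≤ ENNReal.ofReal εK ∧ (∫⁻ x, dN x ∂μN) ≤ ENNReal.ofReal εN

/-- The rate function `R_p(εK, εN)`. -/
noncomputable def Rp (dK dN : I01 → ℝ≥0∞) (εK εN : ℝ) (p : ℝ) : EReal :=
  sInf {e : EReal | ∃ μK μN : Measure I01, Feasible dK dN εK εN μK μN ∧ Fp p μK μN = e}

/-!
Both measures have densities `a`, `b` with respect to their mixture `m`, and `p a + (1 - p) b = 1`
makes these densities bounded, so that `F_p` is the `m`-integral of a bounded function of `a` and
`b`. A discrete probability measure `ν` with the same four integrals (of `a`, `a * dK`, `b * dN` and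
that function) then yields the pair `a ν`, `b ν`, whose mixture is `ν` again. The integral of an
`ℝ⁴`-valued function lies in the convex hull of its essential range, with no closure needed, so
by Carathéodory's theorem `ν` can be supported on five points.
-/

section ConvexIntegral

variable {V : Type*} [NormedAddCommGroup V] [NormedSpace ℝ V]

lemma zero_notMem_interior_convexHull_insert_zero {s : Set V} (hs : Convex ℝ s)
    (hne : s.Nonempty) (h0 : (0 : V) ∉ s) : (0 : V) ∉ interior (convexHull ℝ (insert 0 s)) := by
  intro hint
  obtain ⟨y, hy⟩ := hne
  have hlim : Tendsto (fun t : ℝ => -(t • y)) (𝓝[>] 0) (𝓝 0) := by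
    have hcont : Continuous fun t : ℝ => -(t • y) := by fun_prop
    simpa using (hcont.tendsto 0).mono_left nhdsWithin_le_nhds
  obtain ⟨t, hmem, ht⟩ :=
    ((hlim.eventually_mem (mem_interior_iff_mem_nhds.mp hint)).and self_mem_nhdsWithin).exists
  rw [convexHull_insert ⟨y, hy⟩, hs.convexHull_eq, convexJoin_singleton_left] at hmem
  obtain ⟨z, hz, c, r, -, hr, -, hrz⟩ := Set.mem_iUnion₂.mp hmem
  have htr : t + r ≠ 0 := (add_pos_of_pos_of_nonneg ht hr).ne'
  have hzero : (t / (t + r)) • y + (r / (t + r)) • z = 0 := by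
    have hsum : t • y + r • z = 0 := by simpa [add_eq_zero_iff_neg_eq, eq_comm] using hrz
    rw [div_eq_inv_mul, div_eq_inv_mul, mul_smul, mul_smul, ← smul_add, hsum, smul_zero]
  exact h0 (hzero ▸ hs hy hz (by positivity) (by positivity)
    (by rw [← add_div, div_self htr]))

variable [FiniteDimensional ℝ V]

lemma exists_properSeparation_zero_of_span_eq_top {s : Set V} (hs : Convex ℝ s)
    (hne : s.Nonempty) (h0 : (0 : V) ∉ s) (hspan : Submodule.span ℝ s = ⊤) :
    ∃ l : V →ₗ[ℝ] ℝ, (∀ y ∈ s, 0 ≤ l y) ∧ ∃ y ∈ s, l y ≠ 0 := by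
  have hint : (interior (convexHull ℝ (insert 0 s))).Nonempty := by
    rw [interior_convexHull_nonempty_iff_affineSpan_eq_top, AffineSubspace.ext_iff,
      affineSpan_insert_zero, hspan, Submodule.top_coe, AffineSubspace.top_coe]
  obtain ⟨f, hf, hle⟩ := geometric_hahn_banach_of_nonempty_interior_point (convex_convexHull ℝ _)
    (zero_notMem_interior_convexHull_insert_zero hs hne h0) hint
  refine ⟨-f, fun y hy => ?_, ?_⟩
  · simpa using hle y (subset_convexHull ℝ _ (Set.mem_insert_of_mem _ hy))
  · by_contra! hzero
    refine hf (ContinuousLinearMap.coe_injective (LinearMap.ext_on hspan fun y hy => ?_))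
    simpa using hzero y hy

lemma exists_properSeparation_zero {s : Set V} (hs : Convex ℝ s) (hne : s.Nonempty)
    (h0 : (0 : V) ∉ s) :
    ∃ l : V →ₗ[ℝ] ℝ, (∀ y ∈ s, 0 ≤ l y) ∧ ∃ y ∈ s, l y ≠ 0 := by
  obtain ⟨y₀, hy₀⟩ := hne
  obtain ⟨l, hl, ⟨y, hyW⟩, hy, hly⟩ := exists_properSeparation_zero_of_span_eq_top
    (hs.linear_preimage (Submodule.span ℝ s).subtype)
    ⟨⟨y₀, Submodule.subset_span hy₀⟩, hy₀⟩ (by simpa using h0) Submodule.span_span_coe_preimage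
  obtain ⟨g, rfl⟩ := l.exists_extend
  exact ⟨g, fun z hz => hl ⟨z, Submodule.subset_span hz⟩ hz, y, hy, hly⟩

variable {Ω : Type*} [MeasurableSpace Ω] {m : Measure Ω} [IsProbabilityMeasure m]

lemma zero_mem_of_integral_eq_zero {f : Ω → V} (hf : Integrable f m) (hzero : ∫ x, f x ∂m = 0)
    {s : Set V} (hs : Convex ℝ s) (hfs : ∀ᵐ x ∂m, f x ∈ s) : (0 : V) ∈ s := by
  by_contra h0
  obtain ⟨W, hfW, hWmin⟩ := exists_minimal_of_wellFoundedLT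
    (fun W : Submodule ℝ V => ∀ᵐ x ∂m, f x ∈ W) ⟨⊤, by simp⟩
  obtain ⟨x, hx⟩ := (hfs.and hfW).exists
  obtain ⟨l, hl, y, hy, hly⟩ :=
    exists_properSeparation_zero (hs.inter W.convex) ⟨f x, hx⟩ fun h => h0 h.1
  let l' : V →L[ℝ] ℝ := l.toContinuousLinearMap
  have hnonneg : 0 ≤ᵐ[m] fun x => l' (f x) := by
    filter_upwards [hfs, hfW] with x hxs hxW using hl _ ⟨hxs, hxW⟩
  have hintegral : ∫ x, l' (f x) ∂m = 0 := by rw [l'.integral_comp_comm hf, hzero, map_zero]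
  have hker : ∀ᵐ x ∂m, l' (f x) = 0 :=
    (integral_eq_zero_iff_of_nonneg_ae hnonneg (l'.integrable_comp hf)).mp hintegral
  have hW : W ≤ W ⊓ LinearMap.ker l :=
    hWmin (by filter_upwards [hfW, hker] with x hxW hxl using ⟨hxW, hxl⟩) inf_le_left
  exact hly (hW hy.2).2

/-- Unlike in `Convex.integral_mem`, the set need not be closed. -/
lemma integral_mem_of_convex {f : Ω → V} (hf : Integrable f m) {s : Set V} (hs : Convex ℝ s)
    (hfs : ∀ᵐ x ∂m, f x ∈ s) : ∫ x, f x ∂m ∈ s := by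
  have hcentered : ∫ x, (f x - ∫ y, f y ∂m) ∂m = 0 := by
    simp [integral_sub hf (integrable_const _)]
  simpa using zero_mem_of_integral_eq_zero (hf.sub (integrable_const _)) hcentered
    (hs.translate_preimage_left (∫ y, f y ∂m)) (by simpa using hfs)

end ConvexIntegral

section DiscreteQuadrature

variable {Ω : Type*} [MeasurableSpace Ω]

lemma ofReal_integral_toReal_eq_lintegral {μ : Measure Ω} {g : Ω → ℝ≥0∞}
    (hint : Integrable (fun x => (g x).toReal) μ) (htop : ∀ᵐ x ∂μ, g x ≠ ⊤) :
    ENNReal.ofReal (∫ x, (g x).toReal ∂μ) = ∫⁻ x, g x ∂μ := by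
  rw [ofReal_integral_eq_lintegral_ofReal hint (ae_of_all _ fun _ => ENNReal.toReal_nonneg)]
  exact lintegral_congr_ae (htop.mono fun x hx => ENNReal.ofReal_toReal hx)

variable [MeasurableSingletonClass Ω]

lemma integrable_of_ae_mem_finset {E : Type*} [NormedAddCommGroup E] {ν : Measure Ω}
    [IsFiniteMeasure ν] {s : Finset Ω} (hs : ∀ᵐ x ∂ν, x ∈ s) (f : Ω → E) : Integrable f ν := by
  rw [← Measure.restrict_eq_self_of_ae_mem hs]
  exact IntegrableOn.finset

variable {V : Type*} [NormedAddCommGroup V] [NormedSpace ℝ V] [FiniteDimensional ℝ V]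

theorem exists_finset_integral_eq {m : Measure Ω} [IsProbabilityMeasure m] {f : Ω → V}
    (hf : Integrable f m) {P : Ω → Prop} (hP : ∀ᵐ x ∂m, P x) :
    ∃ (ν : Measure Ω) (s : Finset Ω), IsProbabilityMeasure ν ∧
      s.card ≤ Module.finrank ℝ V + 1 ∧ (∀ᵐ x ∂ν, x ∈ s) ∧ (∀ x ∈ s, P x) ∧
      ∫ x, f x ∂ν = ∫ x, f x ∂m := by
  classical
  have hmem : ∫ x, f x ∂m ∈ convexHull ℝ (f '' {x | P x}) :=
    integral_mem_of_convex hf (convex_convexHull ℝ _)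
      (hP.mono fun x hx => subset_convexHull ℝ _ ⟨x, hx, rfl⟩)
  obtain ⟨ι, _, z, w, hz, hindep, hw, hw1, hsum⟩ := eq_pos_convex_span_of_mem_convexHull hmem
  choose x hxP hxz using fun i => hz (Set.mem_range_self i)
  have hcard : Fintype.card ι ≤ Module.finrank ℝ V + 1 :=
    hindep.card_le_finrank_succ.trans (Nat.succ_le_succ (Submodule.finrank_le _))
  refine ⟨Measure.sum fun i => ENNReal.ofReal (w i) • Measure.dirac (x i),
    Finset.univ.image x, ?_, Finset.card_image_le.trans hcard, ?_, by simpa using hxP, ?_⟩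
  · exact (hw1 ▸ hasSum_fintype w).isProbabilityMeasure_sum_dirac fun i => (hw i).le
  · refine Measure.ae_sum_iff.mpr fun i => Measure.ae_smul_measure ?_ _
    simp [ae_dirac_eq]
  · rw [integral_sum_dirac fun i => ENNReal.ofReal_ne_top, tsum_fintype, ← hsum]
    simp only [ENNReal.toReal_ofReal (hw _).le, hxz]

theorem exists_finset_lintegral_eq_integral_eq {m : Measure Ω} [IsProbabilityMeasure m]
    {ι : Type*} [Fintype ι] {g : ι → Ω → ℝ≥0∞} (hg : ∀ i, AEMeasurable (g i) m)
    (hgtop : ∀ i, ∫⁻ x, g i x ∂m ≠ ⊤) {f : Ω → V} (hf : Integrable f m)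
    {P : Ω → Prop} (hP : ∀ᵐ x ∂m, P x) :
    ∃ (ν : Measure Ω) (s : Finset Ω), IsProbabilityMeasure ν ∧
      s.card ≤ Fintype.card ι + Module.finrank ℝ V + 1 ∧ (∀ᵐ x ∂ν, x ∈ s) ∧ (∀ x ∈ s, P x) ∧
      (∀ i, ∫⁻ x, g i x ∂ν = ∫⁻ x, g i x ∂m) ∧ ∫ x, f x ∂ν = ∫ x, f x ∂m := by
  have hgfin : ∀ᵐ x ∂m, ∀ i, g i x ≠ ⊤ :=
    ae_all_iff.mpr fun i => (ae_lt_top' (hg i) (hgtop i)).mono fun x hx => hx.ne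
  have hgint : ∀ i, Integrable (fun x => (g i x).toReal) m := fun i =>
    integrable_toReal_of_lintegral_ne_top (hg i) (hgtop i)
  obtain ⟨ν, s, hν, hcard, hνs, hsP, hint⟩ :=
    exists_finset_integral_eq (f := fun x => ((fun i => (g i x).toReal), f x))
      ((Integrable.of_eval hgint).prodMk hf) (hgfin.and hP)
  have hgintν : ∀ i, Integrable (fun x => (g i x).toReal) ν := fun i =>
    integrable_of_ae_mem_finset hνs _
  rw [integral_pair (Integrable.of_eval hgintν) (integrable_of_ae_mem_finset hνs f),
    integral_pair (Integrable.of_eval hgint) hf, Prod.mk.injEq] at hint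
  have hgeq : ∀ i, ∫ x, (g i x).toReal ∂ν = ∫ x, (g i x).toReal ∂m := fun i => by
    simpa only [eval_integral hgintν, eval_integral hgint] using congrFun hint.1 i
  refine ⟨ν, s, hν, by simpa using hcard, hνs, fun x hx => (hsP x hx).2, fun i => ?_, hint.2⟩
  rw [← ofReal_integral_toReal_eq_lintegral (hgintν i) (hνs.mono fun x hx => (hsP x hx).1 i),
    ← ofReal_integral_toReal_eq_lintegral (hgint i) (hgfin.mono fun x hx => hx i), hgeq i]

end DiscreteQuadrature

section Mixture

variable {α : Type*} [MeasurableSpace α] {p : ℝ}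

lemma ofReal_add_ofReal_one_sub (hp : p ∈ Set.Icc (0 : ℝ) 1) :
    ENNReal.ofReal p + ENNReal.ofReal (1 - p) = 1 := by
  rw [← ENNReal.ofReal_add hp.1 (sub_nonneg.mpr hp.2), add_sub_cancel, ENNReal.ofReal_one]

lemma isProbabilityMeasure_mix (hp : p ∈ Set.Icc (0 : ℝ) 1) (μ ν : Measure α)
    [IsProbabilityMeasure μ] [IsProbabilityMeasure ν] : IsProbabilityMeasure (mix p μ ν) :=
  ⟨by simp [mix, ofReal_add_ofReal_one_sub hp]⟩

lemma isProbabilityMeasure_of_mix (hp : p ∈ Set.Ico (0 : ℝ) 1) (μ ν : Measure α)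
    [IsProbabilityMeasure μ] [IsProbabilityMeasure (mix p μ ν)] : IsProbabilityMeasure ν := by
  have hmass : ENNReal.ofReal p + ENNReal.ofReal (1 - p) * ν Set.univ
      = ENNReal.ofReal p + ENNReal.ofReal (1 - p) * 1 := by
    rw [mul_one, ofReal_add_ofReal_one_sub ⟨hp.1, hp.2.le⟩, ← measure_univ (μ := mix p μ ν)]
    simp [mix]
  rw [ENNReal.add_right_inj ENNReal.ofReal_ne_top, ENNReal.mul_right_inj
    (ENNReal.ofReal_pos.mpr (sub_pos.mpr hp.2)).ne' ENNReal.ofReal_ne_top] at hmass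
  exact ⟨hmass⟩

lemma absolutelyContinuous_mix_left (hp : 0 < p) (μ ν : Measure α) : μ ≪ mix p μ ν :=
  (Measure.absolutelyContinuous_smul (ENNReal.ofReal_pos.mpr hp).ne').add_right _

lemma absolutelyContinuous_mix_right (hp : p < 1) (μ ν : Measure α) : ν ≪ mix p μ ν := by
  rw [mix, add_comm]
  exact (Measure.absolutelyContinuous_smul
    (ENNReal.ofReal_pos.mpr (sub_pos.mpr hp)).ne').add_right _

lemma mix_withDensity (m : Measure α) (p : ℝ) {a b : α → ℝ≥0∞} (ha : Measurable a)
    (hb : Measurable b) :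
    mix p (m.withDensity a) (m.withDensity b) =
      m.withDensity fun x => ENNReal.ofReal p * a x + ENNReal.ofReal (1 - p) * b x := by
  rw [mix, ← withDensity_smul _ ha, ← withDensity_smul _ hb,
    ← withDensity_add_left (ha.const_smul _)]
  rfl

/-- The density pairs `(a, b)` of two measures whose mixture is the reference measure itself. -/
def MixesToOne (p : ℝ) (a b : ℝ≥0∞) : Prop :=
  ENNReal.ofReal p * a + ENNReal.ofReal (1 - p) * b = 1

lemma MixesToOne.left_le {a b : ℝ≥0∞} (h : MixesToOne p a b) : a ≤ (ENNReal.ofReal p)⁻¹ := by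
  rw [ENNReal.le_inv_iff_mul_le, mul_comm]
  exact le_self_add.trans h.le

lemma MixesToOne.right_le {a b : ℝ≥0∞} (h : MixesToOne p a b) :
    b ≤ (ENNReal.ofReal (1 - p))⁻¹ := by
  rw [ENNReal.le_inv_iff_mul_le, mul_comm]
  exact le_add_self.trans h.le

lemma mix_withDensity_eq_self {m : Measure α} {a b : α → ℝ≥0∞} (ha : Measurable a)
    (hb : Measurable b) (hab : ∀ᵐ x ∂m, MixesToOne p (a x) (b x)) :
    mix p (m.withDensity a) (m.withDensity b) = m := by
  rw [mix_withDensity m p ha hb, withDensity_congr_ae (g := 1) hab, withDensity_one]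

lemma ae_mixesToOne_rnDeriv_mix (p : ℝ) (μ ν : Measure α) [IsFiniteMeasure μ]
    [IsFiniteMeasure ν] :
    ∀ᵐ x ∂mix p μ ν, MixesToOne p (μ.rnDeriv (mix p μ ν) x) (ν.rnDeriv (mix p μ ν) x) := by
  have : IsFiniteMeasure (ENNReal.ofReal p • μ) := μ.smul_finite ENNReal.ofReal_ne_top
  have : IsFiniteMeasure (ENNReal.ofReal (1 - p) • ν) := ν.smul_finite ENNReal.ofReal_ne_top
  have : IsFiniteMeasure (mix p μ ν) := by unfold mix; infer_instance
  filter_upwards [(mix p μ ν).rnDeriv_self,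
    Measure.rnDeriv_add' (ENNReal.ofReal p • μ) (ENNReal.ofReal (1 - p) • ν) (mix p μ ν),
    μ.rnDeriv_smul_left_of_ne_top (mix p μ ν) (r := ENNReal.ofReal p) ENNReal.ofReal_ne_top,
    ν.rnDeriv_smul_left_of_ne_top (mix p μ ν) (r := ENNReal.ofReal (1 - p)) ENNReal.ofReal_ne_top]
    with x hself hadd hμ hν
  rw [Pi.add_apply, hμ, hν] at hadd
  exact hadd.symm.trans hself

end Mixture

section RateIntegral

variable {α : Type*} [MeasurableSpace α] {m : Measure α}

lemma continuous_mul_logb (b : ℝ) : Continuous fun t : ℝ => t * Real.logb b t := by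
  simpa only [Real.logb, mul_div_assoc] using Real.continuous_mul_log.div_const (Real.log b)

lemma integrable_toReal_mul_logb [IsFiniteMeasure m] {a : α → ℝ≥0∞} (ha : Measurable a)
    {C : ℝ≥0∞} (hC : C ≠ ⊤) (haC : ∀ᵐ x ∂m, a x ≤ C) (b : ℝ) :
    Integrable (fun x => (a x).toReal * Real.logb b (a x).toReal) m := by
  obtain ⟨M, hM⟩ := (isCompact_Icc (a := 0) (b := C.toReal)).exists_bound_of_continuousOn
    (continuous_mul_logb b).continuousOn
  refine Integrable.of_bound
    ((continuous_mul_logb b).measurable.comp ha.ennreal_toReal).aestronglyMeasurable M ?_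
  filter_upwards [haC] with x hx
  exact hM _ ⟨ENNReal.toReal_nonneg, ENNReal.toReal_mono hC hx⟩

lemma klDiv2_withDensity [SigmaFinite m] {a : α → ℝ≥0∞} (ha : Measurable a)
    (hatop : ∀ᵐ x ∂m, a x < ⊤)
    (hint : Integrable (fun x => (a x).toReal * Real.logb 2 (a x).toReal) m) :
    klDiv2 (m.withDensity a) m =
      ((∫ x, (a x).toReal * Real.logb 2 (a x).toReal ∂m : ℝ) : EReal) := by
  have hac : m.withDensity a ≪ m := withDensity_absolutelyContinuous m a
  have hlog : (fun x => Real.logb 2 (((m.withDensity a).rnDeriv m x).toReal))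
      =ᵐ[m.withDensity a] fun x => Real.logb 2 (a x).toReal := by
    filter_upwards [hac.ae_le (m.rnDeriv_withDensity ha)] with x hx
    rw [hx]
  have hlogint : Integrable (fun x => Real.logb 2 (a x).toReal) (m.withDensity a) :=
    (integrable_withDensity_iff_integrable_smul' ha hatop).mpr hint
  rw [klDiv2, if_pos ⟨hac, hlogint.congr hlog.symm⟩, integral_congr_ae hlog,
    integral_withDensity_eq_integral_toReal_smul ha hatop]
  simp only [smul_eq_mul]

/-- The integrand of `F_p(a m, b m)` with respect to a measure `m` which is the mixture of `a m`
and `b m`, as a function of the values of the two densities. -/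
noncomputable def rateIntegrand (p : ℝ) (a b : ℝ≥0∞) : ℝ :=
  a.toReal * Real.logb 2 a.toReal + (1 - p) / p * (b.toReal * Real.logb 2 b.toReal)

lemma Fp_withDensity [IsFiniteMeasure m] {p : ℝ} (hp : p ∈ Set.Ioo (0 : ℝ) 1)
    {a b : α → ℝ≥0∞} (ha : Measurable a) (hb : Measurable b)
    (hab : ∀ᵐ x ∂m, MixesToOne p (a x) (b x)) :
    Integrable (fun x => rateIntegrand p (a x) (b x)) m ∧
      Fp p (m.withDensity a) (m.withDensity b) =
        ((∫ x, rateIntegrand p (a x) (b x) ∂m : ℝ) : EReal) := by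
  have hCa : (ENNReal.ofReal p)⁻¹ ≠ ⊤ :=
    ENNReal.inv_ne_top.mpr (ENNReal.ofReal_pos.mpr hp.1).ne'
  have hCb : (ENNReal.ofReal (1 - p))⁻¹ ≠ ⊤ :=
    ENNReal.inv_ne_top.mpr (ENNReal.ofReal_pos.mpr (sub_pos.mpr hp.2)).ne'
  have hale : ∀ᵐ x ∂m, a x ≤ (ENNReal.ofReal p)⁻¹ := hab.mono fun _ h => h.left_le
  have hble : ∀ᵐ x ∂m, b x ≤ (ENNReal.ofReal (1 - p))⁻¹ := hab.mono fun _ h => h.right_le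
  have hinta := integrable_toReal_mul_logb ha hCa hale 2
  have hintb := integrable_toReal_mul_logb hb hCb hble 2
  refine ⟨hinta.add (hintb.const_mul _), ?_⟩
  rw [Fp, if_neg hp.1.ne', mix_withDensity_eq_self ha hb hab,
    klDiv2_withDensity ha (hale.mono fun _ h => h.trans_lt hCa.lt_top) hinta,
    klDiv2_withDensity hb (hble.mono fun _ h => h.trans_lt hCb.lt_top) hintb]
  simp only [rateIntegrand]
  rw [integral_add hinta (hintb.const_mul _), integral_const_mul, EReal.coe_add, EReal.coe_mul]

end RateIntegral

lemma exists_discrete_withDensity {Ω : Type*} [MeasurableSpace Ω] [MeasurableSingletonClass Ω]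
    {m : Measure Ω} [IsProbabilityMeasure m] {p : ℝ} (hp : p ∈ Set.Ioo (0 : ℝ) 1)
    {a b dK dN : Ω → ℝ≥0∞} (ha : Measurable a) (hb : Measurable b)
    (hab : ∀ᵐ x ∂m, MixesToOne p (a x) (b x)) [IsProbabilityMeasure (m.withDensity a)]
    (hdK : Measurable dK) (hdN : Measurable dN)
    (hK : ∫⁻ x, dK x ∂m.withDensity a ≠ ⊤) (hN : ∫⁻ x, dN x ∂m.withDensity b ≠ ⊤) :
    ∃ (ν : Measure Ω) (s : Finset Ω), s.card ≤ 5 ∧ (∀ᵐ x ∂ν, x ∈ s) ∧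
      IsProbabilityMeasure (ν.withDensity a) ∧ IsProbabilityMeasure (ν.withDensity b) ∧
      ∫⁻ x, dK x ∂ν.withDensity a = ∫⁻ x, dK x ∂m.withDensity a ∧
      ∫⁻ x, dN x ∂ν.withDensity b = ∫⁻ x, dN x ∂m.withDensity b ∧
      Fp p (ν.withDensity a) (ν.withDensity b) = Fp p (m.withDensity a) (m.withDensity b) := by
  have hmass (ρ : Measure Ω) : ρ.withDensity a Set.univ = ∫⁻ x, a x ∂ρ := by
    rw [withDensity_apply _ MeasurableSet.univ, setLIntegral_univ]
  obtain ⟨hrate, hFm⟩ := Fp_withDensity hp ha hb hab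
  simp only [lintegral_withDensity_eq_lintegral_mul _ ha hdK,
    lintegral_withDensity_eq_lintegral_mul _ hb hdN] at hK hN ⊢
  have ha1 : ∫⁻ x, a x ∂m = 1 := by rw [← hmass, measure_univ]
  obtain ⟨ν, s, hν, hcard, hνs, hsab, hlint, hint⟩ :=
    exists_finset_lintegral_eq_integral_eq (m := m) (g := ![a, a * dK, b * dN])
      (by simpa [Fin.forall_fin_succ] using
        ⟨ha.aemeasurable, (ha.mul hdK).aemeasurable, (hb.mul hdN).aemeasurable⟩)
      (by simpa [Fin.forall_fin_succ, ha1] using ⟨hK, hN⟩) hrate hab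
  simp only [Fin.forall_fin_succ, Matrix.cons_val_zero, Matrix.cons_val_succ,
    IsEmpty.forall_iff, and_true] at hlint
  obtain ⟨hνa, hνK, hνN⟩ := hlint
  have hνab : ∀ᵐ x ∂ν, MixesToOne p (a x) (b x) := hνs.mono hsab
  have hprobmix : IsProbabilityMeasure (mix p (ν.withDensity a) (ν.withDensity b)) := by
    rwa [mix_withDensity_eq_self ha hb hνab]
  have hproba : IsProbabilityMeasure (ν.withDensity a) := ⟨by rw [hmass, hνa, ha1]⟩
  have hprobb : IsProbabilityMeasure (ν.withDensity b) :=
    isProbabilityMeasure_of_mix (Set.Ioo_subset_Ico_self hp) (ν.withDensity a) _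
  refine ⟨ν, s, by simpa using hcard, hνs, hproba, hprobb, hνK, hνN, ?_⟩
  rw [(Fp_withDensity hp ha hb hνab).2, hint, hFm]

theorem stmt_10_general {Ω : Type*} [MeasurableSpace Ω] [MeasurableSingletonClass Ω]
    {dK dN : Ω → ℝ≥0∞} (hdK : Measurable dK) (hdN : Measurable dN)
    {p : ℝ} (hp : p ∈ Set.Ioo (0 : ℝ) 1)
    (μK μN : Measure Ω) [IsProbabilityMeasure μK] [IsProbabilityMeasure μN]
    (hK : ∫⁻ x, dK x ∂μK ≠ ⊤) (hN : ∫⁻ x, dN x ∂μN ≠ ⊤) :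
    ∃ μK' μN' : Measure Ω, IsProbabilityMeasure μK' ∧ IsProbabilityMeasure μN' ∧
      ∫⁻ x, dK x ∂μK' = ∫⁻ x, dK x ∂μK ∧ ∫⁻ x, dN x ∂μN' = ∫⁻ x, dN x ∂μN ∧
      Fp p μK' μN' = Fp p μK μN ∧
      ∃ s : Finset Ω, s.card ≤ 5 ∧ μK' (↑s : Set Ω)ᶜ = 0 ∧ μN' (↑s : Set Ω)ᶜ = 0 := by
  have : IsProbabilityMeasure (mix p μK μN) :=
    isProbabilityMeasure_mix (Set.Ioo_subset_Icc_self hp) μK μN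
  have hab := ae_mixesToOne_rnDeriv_mix p μK μN
  have ha := Measure.measurable_rnDeriv μK (mix p μK μN)
  have hb := Measure.measurable_rnDeriv μN (mix p μK μN)
  have hμK := Measure.withDensity_rnDeriv_eq _ _ (absolutelyContinuous_mix_left hp.1 μK μN)
  have hμN := Measure.withDensity_rnDeriv_eq _ _ (absolutelyContinuous_mix_right hp.2 μK μN)
  have : IsProbabilityMeasure ((mix p μK μN).withDensity (μK.rnDeriv (mix p μK μN))) := by
    rwa [hμK]
  obtain ⟨ν, s, hcard, hνs, hνa, hνb, hνK, hνN, hF⟩ :=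
    exists_discrete_withDensity hp ha hb hab hdK hdN (by rwa [hμK]) (by rwa [hμN])
  rw [hμK] at hνK hF
  rw [hμN] at hνN hF
  exact ⟨_, _, hνa, hνb, hνK, hνN, hF, s, hcard,
    withDensity_absolutelyContinuous _ _ hνs, withDensity_absolutelyContinuous _ _ hνs⟩

theorem stmt_10
    (dK dN : I01 → ℝ≥0∞)
    (hdK_lsc : LowerSemicontinuous dK) (hdN_lsc : LowerSemicontinuous dN)
    (hdK1 : dK ⟨1, Set.right_mem_Icc.mpr zero_le_one⟩ = 0)
    (hdN0 : dN ⟨0, Set.left_mem_Icc.mpr zero_le_one⟩ = 0)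
    (hc : ∃ c : I01, dK c ≠ ⊤ ∧ dN c ≠ ⊤)
    (εK εN : ℝ) (hεK : 0 < εK) (hεN : 0 < εN)
    (p : ℝ) (hp : p ∈ Set.Ioo (0 : ℝ) 1)
    -- the minimum R_p(εK, εN) is attained and finite
    (hattained : ∃ μK μN : Measure I01,
      Feasible dK dN εK εN μK μN ∧ Fp p μK μN = Rp dK dN εK εN p)
    (hfin : Rp dK dN εK εN p ≠ ⊤) :
    -- there is a minimizing pair of discrete measures with combined support ≤ 5 points
    ∃ μK' μN' : Measure I01,
      Feasible dK dN εK εN μK' μN' ∧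
      Fp p μK' μN' = Rp dK dN εK εN p ∧
      ∃ s : Finset I01, s.card ≤ 5 ∧ μK' ((↑s : Set I01)ᶜ) = 0 ∧ μN' ((↑s : Set I01)ᶜ) = 0 := by
  obtain ⟨μK, μN, ⟨hμK, hμN, hK, hN⟩, hF⟩ := hattained
  obtain ⟨μK', μN', hμK', hμN', hK', hN', hF', hs⟩ := stmt_10_general hdK_lsc.measurable
    hdN_lsc.measurable hp μK μN (ne_top_of_le_ne_top ENNReal.ofReal_ne_top hK)
    (ne_top_of_le_ne_top ENNReal.ofReal_ne_top hN)
  exact ⟨μK', μN', ⟨hμK', hμN', hK'.trans_le hK, hN'.trans_le hN⟩, hF'.trans hF, hs⟩
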